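/- The composition T = H∘C* : L²(0,1) → ℓ² of the Hausdorff moment operator H with the adjoint Cesàro operator C* is a Hilbert–Schmidt operator, and its Hilbert–Schmidt norm satisfies ‖T‖_{HS} ≤ ‖D‖_{HS}·‖H‖, where ‖D‖_{HS} = √(Σ_{i=1}^∞ 1/i²) is the Hilbert–Schmidt norm of the diagonal operator D. -/

import Mathlib

/-!
The moments satisfy `(H (C* x))_j = (H x)_j / (j + 1)`, that is `H ∘ C* = D ∘ H`: by Fubini on the
triangle `0 < t < s < 1`,
`∫₀¹ t ^ j ∫_t^1 x(s)/s ds dt = ∫₀¹ x(s)/s ∫_0^s t ^ j dt ds = (j + 1)⁻¹ ∫₀¹ x(s) s ^ j ds`.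
For an orthonormal family `b`, Bessel's inequality applied to the vector `H† e_j` gives
`∑ᵢ |(H bᵢ)_j|² ≤ ‖H† e_j‖² ≤ ‖H‖²` for each coordinate `j`. Dividing by `(j + 1)²` and summing
over `j` bounds every finite partial sum of `∑ᵢ ‖H C* bᵢ‖²` by `‖H‖² ∑_j 1 / (j + 1)²`.
-/

open MeasureTheory

noncomputable section

/-- The Hilbert space `L²(0,1)` (with Lebesgue measure on `(0,1)`). -/
abbrev L2I : Type := Lp ℝ 2 (volume.restrict (Set.Ioo (0:ℝ) 1))

/-- The Hilbert space `ℓ²` of square-summable real sequences (indexed from `0`,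
so that the entry of index `j : ℕ` is the `(j+1)`-st component in the paper). -/
abbrev ell2 : Type := lp (fun _ : ℕ => ℝ) 2

/-- The inner integral in Fubini's theorem on the triangle `t < s`. -/
lemma integral_triangle_slice (j : ℕ) (c : ℝ) {s : ℝ} (hs : s ∈ Set.Ioo (0:ℝ) 1) :
    ∫ t in Set.Ioo (0:ℝ) 1, (if t < s then c / s * t ^ j else 0)
      = (c * s ^ j) / ((j:ℝ) + 1) := by
  have h1 : (fun t : ℝ => if t < s then c / s * t ^ j else 0)
      = (Set.Iio s).indicator (fun t => c / s * t ^ j) := by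
    ext t; simp [Set.indicator_apply]
  have h2 : Set.Ioo (0:ℝ) 1 ∩ Set.Iio s = Set.Ioo 0 s := by
    ext t
    simp only [Set.mem_inter_iff, Set.mem_Ioo, Set.mem_Iio]
    exact ⟨fun h => ⟨h.1.1, h.2⟩, fun h => ⟨⟨h.1, h.2.trans hs.2⟩, h.2⟩⟩
  have hs0 : s ≠ 0 := hs.1.ne'
  rw [h1, setIntegral_indicator measurableSet_Iio, h2, ← integral_Ioc_eq_integral_Ioo,
    ← intervalIntegral.integral_of_le hs.1.le, intervalIntegral.integral_const_mul, integral_pow]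
  rw [pow_succ, pow_succ]
  field_simp
  ring

/-- Every moment `∫₀¹ x(s) s ^ j ds` of a square-integrable function converges absolutely. -/
lemma integrable_moment (x : L2I) (j : ℕ) :
    Integrable (fun s => x s * s ^ j) (volume.restrict (Set.Ioo (0:ℝ) 1)) := by
  have hx : Integrable x (volume.restrict (Set.Ioo (0:ℝ) 1)) :=
    (Lp.memLp x).integrable (by norm_num)
  refine hx.mono (hx.1.mul (by fun_prop)) ?_
  filter_upwards [ae_restrict_mem measurableSet_Ioo] with s hs
  rw [norm_mul, norm_pow, Real.norm_of_nonneg hs.1.le]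
  exact mul_le_of_le_one_right (norm_nonneg _) (pow_le_one₀ hs.1.le hs.2.le)

/-- The moment identity behind `H ∘ C* = D ∘ H`. -/
lemma moment_cesaro (x : L2I) (j : ℕ) :
    ∫ t in Set.Ioo (0:ℝ) 1, (∫ s in Set.Ioo t 1, x s / s) * t ^ j
      = (∫ s in Set.Ioo (0:ℝ) 1, x s * s ^ j) / ((j:ℝ) + 1) := by
  set μ := volume.restrict (Set.Ioo (0:ℝ) 1) with hμ
  set f : ℝ → ℝ → ℝ := fun t s => if t < s then x s / s * t ^ j else 0 with hf
  have hxm : Measurable x := (Lp.stronglyMeasurable x).measurable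
  have hfm : Measurable (Function.uncurry f) := by
    refine Measurable.ite (measurableSet_lt measurable_fst measurable_snd) ?_ measurable_const
    fun_prop
  have hint : Integrable (Function.uncurry f) (μ.prod μ) := by
    refine (integrable_prod_iff' hfm.aestronglyMeasurable).2 ⟨?_, ?_⟩
    · refine Filter.Eventually.of_forall fun s => ?_
      refine Integrable.of_bound (C := |x s / s|) (hfm.comp (by fun_prop : Measurable
        fun t : ℝ => (t, s))).aestronglyMeasurable ?_
      filter_upwards [ae_restrict_mem measurableSet_Ioo] with t ht
      simp only [Function.uncurry, hf]
      split_ifs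
      · rw [norm_mul, norm_pow, Real.norm_of_nonneg ht.1.le]
        exact mul_le_of_le_one_right (norm_nonneg _) (pow_le_one₀ ht.1.le ht.2.le)
      · simp
    · refine (((integrable_moment x j).norm).div_const ((j:ℝ) + 1)).congr ?_
      filter_upwards [ae_restrict_mem measurableSet_Ioo] with s hs
      rw [norm_mul, norm_pow, Real.norm_of_nonneg hs.1.le,
        ← integral_triangle_slice j ‖x s‖ hs]
      refine setIntegral_congr_fun measurableSet_Ioo fun t ht => ?_
      simp only [Function.uncurry, hf]
      split_ifs
      · rw [norm_mul, norm_pow, Real.norm_of_nonneg ht.1.le, norm_div,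
          Real.norm_of_nonneg hs.1.le]
      · simp
  have hswap := integral_integral_swap hint
  calc ∫ t in Set.Ioo (0:ℝ) 1, (∫ s in Set.Ioo t 1, x s / s) * t ^ j
      = ∫ t, ∫ s, f t s ∂μ ∂μ := by
        refine setIntegral_congr_fun measurableSet_Ioo fun t ht => ?_
        have h1 : f t = (Set.Ioi t).indicator (fun s => x s / s * t ^ j) := by
          ext s; simp [Set.indicator_apply, hf]
        have h2 : Set.Ioo (0:ℝ) 1 ∩ Set.Ioi t = Set.Ioo t 1 := by
          ext s
          simp only [Set.mem_inter_iff, Set.mem_Ioo, Set.mem_Ioi]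
          exact ⟨fun h => ⟨h.2, h.1.2⟩, fun h => ⟨⟨ht.1.trans h.1, h.2⟩, h.1⟩⟩
        simp only [h1]
        rw [hμ, setIntegral_indicator measurableSet_Ioi, h2, integral_mul_const]
    _ = ∫ s, ∫ t, f t s ∂μ ∂μ := hswap
    _ = ∫ s in Set.Ioo (0:ℝ) 1, (x s * s ^ j) / ((j:ℝ) + 1) :=
        setIntegral_congr_fun measurableSet_Ioo fun s hs => integral_triangle_slice j (x s) hs
    _ = _ := integral_div _ _

/-- Each coordinate of a bounded operator into `ℓ²` has norm at most `‖H‖`, so Bessel's inequality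
bounds its values on an orthonormal family. -/
lemma sum_coord_sq_le (H : L2I →L[ℝ] ell2) {ι : Type} {v : ι → L2I} (hv : Orthonormal ℝ v)
    (s : Finset ι) (j : ℕ) : ∑ i ∈ s, (H (v i) j) ^ 2 ≤ ‖H‖ ^ 2 := by
  classical
  set e : ell2 := lp.single 2 j (1:ℝ) with he
  have he1 : ‖e‖ = 1 := by
    rw [he, lp.norm_single (by norm_num)]; simp
  have hco : ∀ i, inner ℝ (v i) (H.adjoint e) = H (v i) j := fun i => by
    rw [ContinuousLinearMap.adjoint_inner_right, he, lp.inner_single_right]; simp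
  calc ∑ i ∈ s, (H (v i) j) ^ 2 = ∑ i ∈ s, ‖inner ℝ (v i) (H.adjoint e)‖ ^ 2 := by
        simp [hco]
    _ ≤ ‖H.adjoint e‖ ^ 2 := hv.sum_inner_products_le _
    _ ≤ ‖H‖ ^ 2 := by
        gcongr
        simpa [he1] using H.adjoint.le_opNorm e

lemma ell2_hasSum_sq (y : ell2) : HasSum (fun j => (y j) ^ 2) (‖y‖ ^ 2) := by
  have h := lp.hasSum_norm (p := 2) (by norm_num) y
  simpa using h

/-- The composition `T = H ∘ C* : L²(0,1) → ℓ²` of the Hausdorff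
moment operator `H` with the adjoint Cesàro operator `C*` is a Hilbert–Schmidt
operator, and its Hilbert–Schmidt norm satisfies `‖T‖_HS ≤ ‖D‖_HS · ‖H‖`, where
`‖D‖_HS = √(Σ_{i=1}^∞ 1/i²)` is the Hilbert–Schmidt norm of the diagonal operator
`D`.  The Hilbert–Schmidt norm is expressed here with respect to an arbitrary
Hilbert basis `b` of `L²(0,1)` as `√(Σ_i ‖T(b i)‖²)` (the value does not depend
on the choice of basis). -/
theorem statement2
    (H : L2I →L[ℝ] ell2) (Cs : L2I →L[ℝ] L2I)
    (hH : ∀ (x : L2I) (j : ℕ), H x j = ∫ t in Set.Ioo (0:ℝ) 1, x t * t ^ j)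
    (hC : ∀ x : L2I, ∀ᵐ t ∂(volume.restrict (Set.Ioo (0:ℝ) 1)),
      Cs x t = ∫ s in Set.Ioo t 1, x s / s) :
    ∀ (ι : Type) (b : HilbertBasis ι ℝ L2I),
      Summable (fun i : ι => ‖(H.comp Cs) (b i)‖ ^ 2) ∧
      Real.sqrt (∑' i : ι, ‖(H.comp Cs) (b i)‖ ^ 2) ≤
        Real.sqrt (∑' i : ℕ, 1 / ((i : ℝ) + 1) ^ 2) * ‖H‖ := by
  intro ι b
  have hT : ∀ (x : L2I) (j : ℕ), (H.comp Cs) x j = H x j / ((j:ℝ) + 1) := fun x j => by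
    rw [ContinuousLinearMap.comp_apply, hH, hH, ← moment_cesaro]
    refine integral_congr_ae ?_
    filter_upwards [hC x] with t ht
    rw [ht]
  have hsum : Summable fun j : ℕ => 1 / ((j:ℝ) + 1) ^ 2 := by
    have h := (summable_nat_add_iff 1).2 (Real.summable_one_div_nat_pow.2 one_lt_two)
    simpa using h
  have hpart : ∀ s : Finset ι, ∑ i ∈ s, ‖(H.comp Cs) (b i)‖ ^ 2
      ≤ (∑' j : ℕ, 1 / ((j:ℝ) + 1) ^ 2) * ‖H‖ ^ 2 := fun s => by
    refine hasSum_le (fun j => ?_)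
      (hasSum_sum fun i (_ : i ∈ s) => ell2_hasSum_sq ((H.comp Cs) (b i)))
      (hsum.hasSum.mul_right (‖H‖ ^ 2))
    simp only [hT, div_pow]
    rw [← Finset.sum_div, one_div_mul_eq_div]
    gcongr
    exact sum_coord_sq_le H b.orthonormal s j
  refine ⟨summable_of_sum_le (fun _ => by positivity) hpart, ?_⟩
  refine (Real.sqrt_le_sqrt (Real.tsum_le_of_sum_le (fun _ => by positivity) hpart)).trans_eq ?_
  rw [Real.sqrt_mul (tsum_nonneg fun _ => by positivity), Real.sqrt_sq (norm_nonneg _)]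

end
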